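/- For any ε ∈ (0,1), any α > 0 and any pair of distributions (P1,P2) with full support on a finite alphabet X, lim_{n→∞} τ*(n,α,ε|φ_n^Gut,P1,P2) = D_{α/(1+α)}(P1‖P2). -/

import Mathlib

open Filter Topology MeasureTheory

namespace Classification

variable {X : Type*} [Fintype X] [DecidableEq X]

/-- `P` is a probability mass function on the finite alphabet `X`. -/
def IsDist (P : X → ℝ) : Prop := (∀ x, 0 ≤ P x) ∧ ∑ x, P x = 1

/-- `P` has full support. -/
def FullSupport (P : X → ℝ) : Prop := ∀ x, 0 < P x

/-- Empirical distribution (type) of a sequence `x : Fin m → X`. -/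
noncomputable def empDist {m : ℕ} (x : Fin m → X) : X → ℝ :=
  fun a => ((Finset.univ.filter fun i => x i = a).card : ℝ) / m

/-- Real-valued KL divergence with the usual `0 · log 0 = 0` convention. -/
noncomputable def klDivR (Q P : X → ℝ) : ℝ := ∑ x, Q x * Real.log (Q x / P x)

open Classical in
/-- Extended-real-valued KL divergence: `⊤` when `Q` is not absolutely continuous w.r.t. `P`. -/
noncomputable def klDivE (Q P : X → ℝ) : EReal :=
  if ∀ x, P x = 0 → Q x = 0 then ((klDivR Q P : ℝ) : EReal) else ⊤

/-- The mixture `(α P1 + P2) / (1 + α)`. -/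
noncomputable def mix (P1 P2 : X → ℝ) (α : ℝ) : X → ℝ :=
  fun x => (α * P1 x + P2 x) / (1 + α)

/-- Generalized Jensen–Shannon divergence
`GJS(P1,P2,α) = α D(P1 ‖ (αP1+P2)/(1+α)) + D(P2 ‖ (αP1+P2)/(1+α))`. -/
noncomputable def GJS (P1 P2 : X → ℝ) (α : ℝ) : ℝ :=
  α * klDivR P1 (mix P1 P2 α) + klDivR P2 (mix P1 P2 α)

/-- Training sequence length `N = ⌈α n⌉`. -/
noncomputable def trainLen (α : ℝ) (n : ℕ) : ℕ := ⌈α * (n : ℝ)⌉₊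

/-- Probability of observing the sequence `x` under i.i.d. sampling from `P`. -/
noncomputable def seqProb (P : X → ℝ) {m : ℕ} (x : Fin m → X) : ℝ := ∏ i, P (x i)

/-- A binary classification test: output `true` means "declare H₂",
`false` means "declare H₁". -/
abbrev BTest (X : Type*) (α : ℝ) (n : ℕ) : Type _ :=
  (Fin (trainLen α n) → X) → (Fin (trainLen α n) → X) → (Fin n → X) → Bool

/-- Type-I error probability: probability of declaring `H₂` when `Y^n ~ P1` (hypothesis H₁). -/
noncomputable def beta1 {α : ℝ} {n : ℕ} (φ : BTest X α n) (P1 P2 : X → ℝ) : ℝ :=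
  ∑ x1 : Fin (trainLen α n) → X, ∑ x2 : Fin (trainLen α n) → X, ∑ y : Fin n → X,
    if φ x1 x2 y = true then seqProb P1 x1 * seqProb P2 x2 * seqProb P1 y else 0

/-- Type-II error probability: probability of declaring `H₁` when `Y^n ~ P2` (hypothesis H₂). -/
noncomputable def beta2 {α : ℝ} {n : ℕ} (φ : BTest X α n) (P1 P2 : X → ℝ) : ℝ :=
  ∑ x1 : Fin (trainLen α n) → X, ∑ x2 : Fin (trainLen α n) → X, ∑ y : Fin n → X,
    if φ x1 x2 y = false then seqProb P1 x1 * seqProb P2 x2 * seqProb P2 y else 0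

open Classical in
/-- Gutman's test with threshold `lam`: declare `H₁` iff `GJS(T̂_{x₁}, T̂_y, α) ≤ lam`. -/
noncomputable def gutman (α lam : ℝ) (n : ℕ) : BTest X α n :=
  fun x1 _ y => if GJS (empDist x1) (empDist y) α ≤ lam then false else true

open Classical in
/-- `- log x` as an extended real, with `⊤` at `x = 0`. -/
noncomputable def negLogE (x : ℝ) : EReal :=
  if x = 0 then ⊤ else ((-Real.log x : ℝ) : EReal)

/-- Gutman's exponent function
`F(P1,P2,α,lam) = min { α D(Q1‖P1) + D(Q2‖P2) : GJS(Q1,Q2,α) ≤ lam }` (as an inf in `EReal`). -/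
noncomputable def Fexp (P1 P2 : X → ℝ) (α lam : ℝ) : EReal :=
  sInf {v : EReal | ∃ Q1 Q2 : X → ℝ, IsDist Q1 ∧ IsDist Q2 ∧ GJS Q1 Q2 α ≤ lam ∧
    v = (α : EReal) * klDivE Q1 P1 + klDivE Q2 P2}

/-- Expectation of `f` under `P`. -/
noncomputable def expect (P : X → ℝ) (f : X → ℝ) : ℝ := ∑ x, P x * f x

/-- Variance of `f` under `P`. -/
noncomputable def varD (P : X → ℝ) (f : X → ℝ) : ℝ :=
  expect P (fun x => (f x - expect P f) ^ 2)

/-- Information density `ı₁(x) = log((1+α) P1(x) / (α P1(x) + P2(x)))`. -/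
noncomputable def iDens1 (P1 P2 : X → ℝ) (α : ℝ) (x : X) : ℝ :=
  Real.log ((1 + α) * P1 x / (α * P1 x + P2 x))

/-- Information density `ı₂(x) = log((1+α) P2(x) / (α P1(x) + P2(x)))`. -/
noncomputable def iDens2 (P1 P2 : X → ℝ) (α : ℝ) (x : X) : ℝ :=
  Real.log ((1 + α) * P2 x / (α * P1 x + P2 x))

/-- The dispersion `V(P1,P2,α) = α Var_{P1}[ı₁] + Var_{P2}[ı₂]`. -/
noncomputable def disp (P1 P2 : X → ℝ) (α : ℝ) : ℝ :=
  α * varD P1 (iDens1 P1 P2 α) + varD P2 (iDens2 P1 P2 α)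

/-- The standard Gaussian cumulative distribution function `Φ`. -/
noncomputable def stdCDF (x : ℝ) : ℝ :=
  (Real.sqrt (2 * Real.pi))⁻¹ * ∫ t in Set.Iic x, Real.exp (-t ^ 2 / 2)

/-- The inverse standard Gaussian cdf `Φ⁻¹`. -/
noncomputable def stdCDFInv (p : ℝ) : ℝ := sInf {x : ℝ | p ≤ stdCDF x}

/-- The non-asymptotic fundamental limit `λ*(n, α, ε | P1, P2)` for binary classification. -/
noncomputable def lamStar (α : ℝ) (n : ℕ) (ε : ℝ) (P1 P2 : X → ℝ) : ℝ :=
  sSup {lam : ℝ | 0 ≤ lam ∧ ∃ φ : BTest X α n,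
    (∀ Q1 Q2 : X → ℝ, IsDist Q1 → IsDist Q2 →
      beta1 φ Q1 Q2 ≤ Real.exp (-((n : ℝ) * lam))) ∧
    beta2 φ P1 P2 ≤ ε}

/-- Rényi divergence of order `γ`. -/
noncomputable def renyi (γ : ℝ) (P1 P2 : X → ℝ) : ℝ :=
  (1 / (γ - 1)) * Real.log (∑ x, P1 x ^ γ * P2 x ^ (1 - γ))

/-- The fundamental limit `τ*(n, α, ε | φ_n^Gut, P1, P2)` in the dual setting for Gutman's test. -/
noncomputable def tauStarGut (α : ℝ) (n : ℕ) (ε : ℝ) (P1 P2 : X → ℝ) : ℝ :=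
  sSup {τ : ℝ | 0 ≤ τ ∧ ∃ lam : ℝ, 0 ≤ lam ∧
    (∀ Q1 Q2 : X → ℝ, IsDist Q1 → IsDist Q2 →
      beta1 (gutman α lam n) Q1 Q2 ≤ ε) ∧
    beta2 (gutman α lam n) P1 P2 ≤ Real.exp (-((n : ℝ) * τ))}

/-- A two-sample homogeneity test: `true` means "declare H₂" (different distributions). -/
abbrev TTest (X : Type*) (α : ℝ) (n : ℕ) : Type _ :=
  (Fin (trainLen α n) → X) → (Fin n → X) → Bool

/-- False-alarm probability of a two-sample test. -/
noncomputable def betaFA {α : ℝ} {n : ℕ} (φ : TTest X α n) (P1 : X → ℝ) : ℝ :=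
  ∑ x : Fin (trainLen α n) → X, ∑ y : Fin n → X,
    if φ x y = true then seqProb P1 x * seqProb P1 y else 0

/-- Miss-detection probability of a two-sample test. -/
noncomputable def betaMD {α : ℝ} {n : ℕ} (φ : TTest X α n) (P1 P2 : X → ℝ) : ℝ :=
  ∑ x : Fin (trainLen α n) → X, ∑ y : Fin n → X,
    if φ x y = false then seqProb P1 x * seqProb P2 y else 0

/-- The fundamental limit `ξ*(n, α, ε | P1, P2)` for two-sample homogeneity testing. -/
noncomputable def xiStar (α : ℝ) (n : ℕ) (ε : ℝ) (P1 P2 : X → ℝ) : ℝ :=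
  sSup {lam : ℝ | 0 ≤ lam ∧ ∃ φ : TTest X α n,
    (∀ Q1 : X → ℝ, IsDist Q1 → betaFA φ Q1 ≤ Real.exp (-((n : ℝ) * lam))) ∧
    betaMD φ P1 P2 ≤ ε}

/-- An M-ary classification test with the rejection option: `some j` means "declare H_j",
`none` means "reject". -/
abbrev MTest (X : Type*) (M : ℕ) (α : ℝ) (n : ℕ) : Type _ :=
  (Fin M → Fin (trainLen α n) → X) → (Fin n → X) → Option (Fin M)

/-- Type-`j` error probability: probability of declaring some hypothesis other than
`H_j` or rejection, under `H_j`. -/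
noncomputable def betaM {M : ℕ} {α : ℝ} {n : ℕ} (ψ : MTest X M α n)
    (P : Fin M → X → ℝ) (j : Fin M) : ℝ :=
  ∑ xs : Fin M → Fin (trainLen α n) → X, ∑ y : Fin n → X,
    if ψ xs y ≠ some j ∧ ψ xs y ≠ none then
      (∏ i, seqProb (P i) (xs i)) * seqProb (P j) y else 0

/-- Type-`j` rejection probability: probability of rejecting under `H_j`. -/
noncomputable def zetaM {M : ℕ} {α : ℝ} {n : ℕ} (ψ : MTest X M α n)
    (P : Fin M → X → ℝ) (j : Fin M) : ℝ :=
  ∑ xs : Fin M → Fin (trainLen α n) → X, ∑ y : Fin n → X,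
    if ψ xs y = none then (∏ i, seqProb (P i) (xs i)) * seqProb (P j) y else 0

/-- The fundamental limit `λ*(n, α, ε | P)` for M-ary classification with rejection. -/
noncomputable def lamStarM (M : ℕ) (α : ℝ) (n : ℕ) (ε : Fin M → ℝ)
    (P : Fin M → X → ℝ) : ℝ :=
  sSup {lam : ℝ | 0 ≤ lam ∧ ∃ ψ : MTest X M α n,
    (∀ Q : Fin M → X → ℝ, (∀ i, IsDist (Q i)) → ∀ j,
      betaM ψ Q j ≤ Real.exp (-((n : ℝ) * lam))) ∧
    (∀ j, zetaM ψ P j ≤ ε j)}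

open Classical in
/-- Gutman's M-ary test with rejection and threshold `lam`. -/
noncomputable def gutmanM (M : ℕ) [NeZero M] (α lam : ℝ) (n : ℕ) : MTest X M α n :=
  fun xs y =>
    if ∃ i k : Fin M, i ≠ k ∧ GJS (empDist (xs i)) (empDist y) α ≤ lam ∧
        GJS (empDist (xs k)) (empDist y) α ≤ lam then none
    else if h : ∃ j : Fin M, GJS (empDist (xs j)) (empDist y) α ≤ lam then some h.choose
    else some 0

/-- The fundamental limit `τ*(n, α, ε | Ψ_n^Gut, P)` in the dual setting for
Gutman's M-ary test. -/
noncomputable def tauStarGutM (M : ℕ) [NeZero M] (α : ℝ) (n : ℕ) (ε : ℝ)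
    (P : Fin M → X → ℝ) : ℝ :=
  sSup {τ : ℝ | 0 ≤ τ ∧ ∃ lam : ℝ, 0 ≤ lam ∧
    (∀ Q : Fin M → X → ℝ, (∀ i, IsDist (Q i)) → ∀ j,
      betaM (gutmanM M α lam n) Q j ≤ ε) ∧
    (∀ j, zetaM (gutmanM M α lam n) P j ≤ Real.exp (-((n : ℝ) * τ)))}

/-- Generalized divergence of three distributions
`D_γ(P1,P2,P3) = (γ-1)⁻¹ log Σ_x P1(x)^{1-γ} P2(x)^{γ/2} P3(x)^{γ/2}`. -/
noncomputable def genDiv (γ : ℝ) (P1 P2 P3 : X → ℝ) : ℝ :=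
  (1 / (γ - 1)) * Real.log (∑ x, P1 x ^ (1 - γ) * P2 x ^ (γ / 2) * P3 x ^ (γ / 2))

/-- A binary classification test with the rejection option: `some 0` means "declare H₁",
`some 1` means "declare H₂", `none` means "reject". -/
abbrev RTest (X : Type*) (α : ℝ) (n : ℕ) : Type _ :=
  (Fin (trainLen α n) → X) → (Fin (trainLen α n) → X) → (Fin n → X) → Option (Fin 2)

/-- Type-1 error probability of a rejection test: declare `H₂` under `H₁`. -/
noncomputable def beta1R {α : ℝ} {n : ℕ} (ψ : RTest X α n) (P1 P2 : X → ℝ) : ℝ :=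
  ∑ x1 : Fin (trainLen α n) → X, ∑ x2 : Fin (trainLen α n) → X, ∑ y : Fin n → X,
    if ψ x1 x2 y = some 1 then seqProb P1 x1 * seqProb P2 x2 * seqProb P1 y else 0

/-- Type-2 error probability of a rejection test: declare `H₁` under `H₂`. -/
noncomputable def beta2R {α : ℝ} {n : ℕ} (ψ : RTest X α n) (P1 P2 : X → ℝ) : ℝ :=
  ∑ x1 : Fin (trainLen α n) → X, ∑ x2 : Fin (trainLen α n) → X, ∑ y : Fin n → X,
    if ψ x1 x2 y = some 0 then seqProb P1 x1 * seqProb P2 x2 * seqProb P2 y else 0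

open Classical in
/-- Type-`j` rejection probability of a binary rejection test. -/
noncomputable def zetaR {α : ℝ} {n : ℕ} (ψ : RTest X α n) (P1 P2 : X → ℝ) (j : Fin 2) : ℝ :=
  ∑ x1 : Fin (trainLen α n) → X, ∑ x2 : Fin (trainLen α n) → X, ∑ y : Fin n → X,
    if ψ x1 x2 y = none then
      seqProb P1 x1 * seqProb P2 x2 * seqProb (if j = 0 then P1 else P2) y else 0

/-- A binary test is type-based if it depends on the data only through the
triple of empirical distributions. -/
def TypeBasedB {α : ℝ} {n : ℕ} (φ : BTest X α n) : Prop :=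
  ∀ x1 x1' x2 x2' : Fin (trainLen α n) → X, ∀ y y' : Fin n → X,
    empDist x1 = empDist x1' → empDist x2 = empDist x2' → empDist y = empDist y' →
      φ x1 x2 y = φ x1' x2' y'

/-- An M-ary test is type-based if it depends on the data only through the
tuple of empirical distributions. -/
def TypeBasedM {M : ℕ} {α : ℝ} {n : ℕ} (ψ : MTest X M α n) : Prop :=
  ∀ xs xs' : Fin M → Fin (trainLen α n) → X, ∀ y y' : Fin n → X,
    (∀ i, empDist (xs i) = empDist (xs' i)) → empDist y = empDist y' →
      ψ xs y = ψ xs' y'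

open Classical in
/-- Probability of an event under hypothesis `H₂` in the binary setup. -/
noncomputable def prH2E (α : ℝ) (n : ℕ) (P1 P2 : X → ℝ)
    (E : (Fin (trainLen α n) → X) → (Fin (trainLen α n) → X) → (Fin n → X) → Prop) : ℝ :=
  ∑ x1 : Fin (trainLen α n) → X, ∑ x2 : Fin (trainLen α n) → X, ∑ y : Fin n → X,
    if E x1 x2 y then seqProb P1 x1 * seqProb P2 x2 * seqProb P2 y else 0

open Classical in
/-- Probability of an event under hypothesis `H_j` in the M-ary setup. -/
noncomputable def prHjM (M : ℕ) (α : ℝ) (n : ℕ) (P : Fin M → X → ℝ) (j : Fin M)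
    (E : (Fin M → Fin (trainLen α n) → X) → (Fin n → X) → Prop) : ℝ :=
  ∑ xs : Fin M → Fin (trainLen α n) → X, ∑ y : Fin n → X,
    if E xs y then (∏ i, seqProb (P i) (xs i)) * seqProb (P j) y else 0

/-- `η_n(α) = |X| log(n+1)/n + 2|X| log(1+αn)/(αn)`. -/
noncomputable def etaN (X : Type*) [Fintype X] (α : ℝ) (n : ℕ) : ℝ :=
  (Fintype.card X : ℝ) * Real.log ((n : ℝ) + 1) / n +
    2 * (Fintype.card X : ℝ) * Real.log (1 + α * n) / (α * n)

/-- `η_{n,M} = M |X| log(nα+1)/(nα) + |X| log(n+1)/n`. -/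
noncomputable def etaNM (X : Type*) [Fintype X] (M : ℕ) (α : ℝ) (n : ℕ) : ℝ :=
  (M : ℝ) * (Fintype.card X : ℝ) * Real.log ((n : ℝ) * α + 1) / ((n : ℝ) * α) +
    (Fintype.card X : ℝ) * Real.log ((n : ℝ) + 1) / n

/-- `Q` is an `m`-type: the empirical distribution of some sequence of length `m`. -/
def IsTypeDist (m : ℕ) (Q : X → ℝ) : Prop := ∃ x : Fin m → X, empDist x = Q

/-- The type-restricted exponent function `F_n`. -/
noncomputable def Fn (n : ℕ) (P1 P2 : X → ℝ) (α lam : ℝ) : ℝ :=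
  sInf {v : ℝ | ∃ Q1 Q2 : X → ℝ, IsTypeDist (trainLen α n) Q1 ∧ IsTypeDist n Q2 ∧
    GJS Q1 Q2 α ≤ lam ∧ v = α * klDivR Q1 P1 + klDivR Q2 P2}

/-- The second smallest value of a finite family of reals:
`min_{i ≠ j} max (v i) (v j)`. -/
noncomputable def secondMin {M : ℕ} (v : Fin M → ℝ) : ℝ :=
  sInf {t : ℝ | ∃ i j : Fin M, i ≠ j ∧ t = max (v i) (v j)}

/-- The tilted distribution `P^{(γ)}` with `γ = α/(1+α)`. -/
noncomputable def tilt (α : ℝ) (P1 P2 : X → ℝ) : X → ℝ :=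
  fun x => P1 x ^ (α / (1 + α)) * P2 x ^ (1 / (1 + α)) /
    ∑ a, P1 a ^ (α / (1 + α)) * P2 a ^ (1 / (1 + α))

/-! With `γ = α / (1 + α)`, the tilted distribution `T ∝ P1 ^ γ * P2 ^ (1 - γ)` satisfies
`α * log (T / P1) + log (T / P2) = D_γ(P1‖P2)` pointwise. Hence on two samples of lengths
`⌈α n⌉` and `n` the log-likelihood ratio of `(T, T)` against `(P1, P2)` is `n * D_γ(P1‖P2)`, up to
an error that is a small multiple of `n` as soon as the types of the samples are close, and a small
generalized Jensen–Shannon divergence forces them to be close.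

For a small fixed threshold `η`, changing measure from `(P1, P2)` to `(T, T)` therefore bounds the
type-II error probability by `exp (-n (D_γ - δ))`. The method of types bounds the type-I error
probability by a polynomial times `exp (-n η)`, uniformly in the distributions, because
`GJS(Q1, Q2, α) ≤ α D(Q1‖P) + D(Q2‖P)` for every `P`. Conversely, a test with universal level `ε`
accepts a pair of samples drawn from `(T, T)` with probability at least `1 - ε`, and the same change
of measure turns this into the lower bound `(1 - ε) exp (-n (D_γ + δ))` on its type-II error
probability. -/

section Divergence

omit [DecidableEq X]

lemma IsDist.le_one {P : X → ℝ} (hP : IsDist P) (x : X) : P x ≤ 1 :=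
  hP.2 ▸ Finset.single_le_sum (fun y _ => hP.1 y) (Finset.mem_univ x)

lemma IsDist.nonempty {P : X → ℝ} (hP : IsDist P) : Nonempty X := by
  by_contra h
  have := hP.2
  simp [not_nonempty_iff.mp h] at this

lemma sq_sqrt_sub_sqrt_add_sub_le_mul_log {q p : ℝ} (hq : 0 ≤ q) (hp : 0 ≤ p)
    (h : p = 0 → q = 0) : (√q - √p) ^ 2 + (q - p) ≤ q * Real.log (q / p) := by
  rcases hq.eq_or_lt with rfl | hq
  · simp [Real.sq_sqrt hp]
  have hp : 0 < p := hp.lt_of_ne fun h0 => hq.ne' (h h0.symm)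
  have hlog : 2 * (1 - (√(q / p))⁻¹) ≤ Real.log (q / p) := by
    have := Real.one_sub_inv_le_log_of_pos (Real.sqrt_pos.mpr (div_pos hq hp))
    rw [Real.log_sqrt (div_pos hq hp).le] at this
    linarith
  calc (√q - √p) ^ 2 + (q - p) = q * (2 * (1 - (√(q / p))⁻¹)) := by
        have hq' : √q ≠ 0 := (Real.sqrt_pos.mpr hq).ne'
        rw [Real.sqrt_div hq.le, inv_div]
        field_simp
        linear_combination (√q - 2 * √p) * Real.sq_sqrt hq.le + √q * Real.sq_sqrt hp.le
    _ ≤ q * Real.log (q / p) := by gcongr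

lemma sum_sq_sqrt_sub_sqrt_le_klDivR {Q P : X → ℝ} (hQ : IsDist Q) (hP : IsDist P)
    (h : ∀ x, P x = 0 → Q x = 0) : ∑ x, (√(Q x) - √(P x)) ^ 2 ≤ klDivR Q P := by
  have := Finset.sum_le_sum (s := Finset.univ) fun x _ =>
    sq_sqrt_sub_sqrt_add_sub_le_mul_log (hQ.1 x) (hP.1 x) (h x)
  rw [Finset.sum_add_distrib, Finset.sum_sub_distrib, hQ.2, hP.2] at this
  simpa only [klDivR, sub_self, add_zero] using this

lemma klDivR_nonneg {Q P : X → ℝ} (hQ : IsDist Q) (hP : IsDist P)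
    (h : ∀ x, P x = 0 → Q x = 0) : 0 ≤ klDivR Q P :=
  (Finset.sum_nonneg fun _ _ => sq_nonneg _).trans (sum_sq_sqrt_sub_sqrt_le_klDivR hQ hP h)

lemma sq_sub_le_four_mul_klDivR {Q P : X → ℝ} (hQ : IsDist Q) (hP : IsDist P)
    (h : ∀ x, P x = 0 → Q x = 0) (x : X) : (Q x - P x) ^ 2 ≤ 4 * klDivR Q P := by
  have hsum : √(Q x) + √(P x) ≤ 2 := by
    linarith [Real.sqrt_le_one.mpr (hQ.le_one x), Real.sqrt_le_one.mpr (hP.le_one x)]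
  calc (Q x - P x) ^ 2 = (√(Q x) + √(P x)) ^ 2 * (√(Q x) - √(P x)) ^ 2 := by
        rw [← mul_pow, ← sq_sub_sq, Real.sq_sqrt (hQ.1 x), Real.sq_sqrt (hP.1 x)]
    _ ≤ 2 ^ 2 * (√(Q x) - √(P x)) ^ 2 := by gcongr
    _ ≤ 2 ^ 2 * ∑ y, (√(Q y) - √(P y)) ^ 2 := by
        gcongr
        exact Finset.single_le_sum (f := fun y => (√(Q y) - √(P y)) ^ 2)
          (fun _ _ => sq_nonneg _) (Finset.mem_univ x)
    _ ≤ 4 * klDivR Q P := by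
        linarith [sum_sq_sqrt_sub_sqrt_le_klDivR hQ hP h]

omit [Fintype X] in
lemma one_add_mul_mix {α : ℝ} (hα : 0 < α) (Q1 Q2 : X → ℝ) (x : X) :
    (1 + α) * mix Q1 Q2 α x = α * Q1 x + Q2 x :=
  mul_div_cancel₀ _ (by positivity)

lemma isDist_mix {Q1 Q2 : X → ℝ} (h1 : IsDist Q1) (h2 : IsDist Q2) {α : ℝ} (hα : 0 < α) :
    IsDist (mix Q1 Q2 α) := by
  refine ⟨fun x => ?_, ?_⟩
  · have := h1.1 x
    have := h2.1 x
    unfold mix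
    positivity
  · unfold mix
    rw [← Finset.sum_div, Finset.sum_add_distrib, ← Finset.mul_sum, h1.2, h2.2, mul_one,
      add_comm, div_self (by positivity)]

lemma eq_zero_of_mix_eq_zero {Q1 Q2 : X → ℝ} (h1 : IsDist Q1) (h2 : IsDist Q2) {α : ℝ}
    (hα : 0 < α) {x : X} (h : mix Q1 Q2 α x = 0) : Q1 x = 0 ∧ Q2 x = 0 := by
  have hsum : α * Q1 x + Q2 x = 0 := by rw [← one_add_mul_mix hα, h, mul_zero]
  rw [add_eq_zero_iff_of_nonneg (mul_nonneg hα.le (h1.1 x)) (h2.1 x)] at hsum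
  exact ⟨(mul_eq_zero.mp hsum.1).resolve_left hα.ne', hsum.2⟩

lemma mul_log_div_eq_add {q m p : ℝ} (hm : m = 0 → q = 0) (hp : p = 0 → q = 0) :
    q * Real.log (q / p) = q * Real.log (q / m) + q * Real.log (m / p) := by
  rcases eq_or_ne q 0 with rfl | hq
  · simp
  · rw [Real.log_div hq (mt hp hq), Real.log_div hq (mt hm hq),
      Real.log_div (mt hm hq) (mt hp hq)]
    ring

lemma mul_klDivR_add_klDivR_eq {Q1 Q2 P : X → ℝ} (h1 : IsDist Q1) (h2 : IsDist Q2) {α : ℝ}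
    (hα : 0 < α) (hQ1 : ∀ x, P x = 0 → Q1 x = 0) (hQ2 : ∀ x, P x = 0 → Q2 x = 0) :
    α * klDivR Q1 P + klDivR Q2 P = GJS Q1 Q2 α + (1 + α) * klDivR (mix Q1 Q2 α) P := by
  simp only [GJS, klDivR, Finset.mul_sum, ← Finset.sum_add_distrib]
  refine Finset.sum_congr rfl fun x _ => ?_
  rw [mul_log_div_eq_add (fun h => (eq_zero_of_mix_eq_zero h1 h2 hα h).1) (hQ1 x),
    mul_log_div_eq_add (fun h => (eq_zero_of_mix_eq_zero h1 h2 hα h).2) (hQ2 x)]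
  linear_combination -Real.log (mix Q1 Q2 α x / P x) * one_add_mul_mix hα Q1 Q2 x

lemma GJS_le_mul_klDivR_add_klDivR {Q1 Q2 P : X → ℝ} (h1 : IsDist Q1) (h2 : IsDist Q2)
    (hP : IsDist P) {α : ℝ} (hα : 0 < α) (hQ1 : ∀ x, P x = 0 → Q1 x = 0)
    (hQ2 : ∀ x, P x = 0 → Q2 x = 0) : GJS Q1 Q2 α ≤ α * klDivR Q1 P + klDivR Q2 P := by
  rw [mul_klDivR_add_klDivR_eq h1 h2 hα hQ1 hQ2]
  have := klDivR_nonneg (isDist_mix h1 h2 hα) hP fun x hx => by simp [mix, hQ1 x hx, hQ2 x hx]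
  exact le_add_of_nonneg_right (by positivity)

lemma mul_sq_sub_le_GJS {Q1 Q2 : X → ℝ} (h1 : IsDist Q1) (h2 : IsDist Q2) {α : ℝ}
    (hα : 0 < α) (x : X) : α / (1 + α) * (Q1 x - Q2 x) ^ 2 ≤ 4 * GJS Q1 Q2 α := by
  have hM := isDist_mix h1 h2 hα
  have hQ1 := sq_sub_le_four_mul_klDivR h1 hM
    (fun x hx => (eq_zero_of_mix_eq_zero h1 h2 hα hx).1) x
  have hQ2 := sq_sub_le_four_mul_klDivR h2 hM
    (fun x hx => (eq_zero_of_mix_eq_zero h1 h2 hα hx).2) x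
  calc α / (1 + α) * (Q1 x - Q2 x) ^ 2
      = α * (Q1 x - mix Q1 Q2 α x) ^ 2 + (Q2 x - mix Q1 Q2 α x) ^ 2 := by
        unfold mix
        field_simp
        ring
    _ ≤ α * (4 * klDivR Q1 (mix Q1 Q2 α)) + 4 * klDivR Q2 (mix Q1 Q2 α) := by gcongr
    _ = 4 * GJS Q1 Q2 α := by
        unfold GJS
        ring

lemma exists_abs_sub_le_of_GJS_le {α c : ℝ} (hα : 0 < α) (hc : 0 < c) :
    ∃ η : ℝ, 0 < η ∧ ∀ Q1 Q2 : X → ℝ, IsDist Q1 → IsDist Q2 → GJS Q1 Q2 α ≤ η →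
      ∀ x, |Q1 x - Q2 x| ≤ c := by
  refine ⟨α / (1 + α) * c ^ 2 / 4, by positivity, fun Q1 Q2 h1 h2 h x => ?_⟩
  refine abs_le_of_sq_le_sq (le_of_mul_le_mul_left ?_ (by positivity : 0 < α / (1 + α))) hc.le
  linarith [mul_sq_sub_le_GJS h1 h2 hα x]

end Divergence

section Types

variable {m : ℕ}

omit [Fintype X] [DecidableEq X] in
lemma seqProb_nonneg {P : X → ℝ} (hP : ∀ x, 0 ≤ P x) (x : Fin m → X) : 0 ≤ seqProb P x :=
  Finset.prod_nonneg fun _ _ => hP _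

omit [DecidableEq X] in
lemma sum_seqProb {P : X → ℝ} (hP : IsDist P) (m : ℕ) : ∑ x : Fin m → X, seqProb P x = 1 := by
  unfold seqProb
  rw [← Fintype.sum_pow, hP.2, one_pow]

omit [Fintype X] in
lemma empDist_nonneg (x : Fin m → X) (a : X) : 0 ≤ empDist x a := by
  unfold empDist
  positivity

omit [Fintype X] in
lemma empDist_apply_pos (x : Fin m → X) (i : Fin m) : 0 < empDist x (x i) := by
  have := i.pos
  have : 0 < (Finset.univ.filter fun j => x j = x i).card := Finset.card_pos.mpr ⟨i, by simp⟩
  unfold empDist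
  positivity

omit [Fintype X] in
lemma empDist_eq_zero {x : Fin m → X} {a : X} (h : ∀ i, x i ≠ a) : empDist x a = 0 := by
  simp [empDist, h]

lemma sum_apply_eq_mul_sum_empDist (x : Fin m → X) (f : X → ℝ) :
    ∑ i, f (x i) = m * ∑ a, empDist x a * f a := by
  rw [← Finset.sum_fiberwise' Finset.univ x f, Finset.mul_sum]
  refine Finset.sum_congr rfl fun a _ => ?_
  rw [Finset.sum_const, nsmul_eq_mul, empDist, ← mul_assoc, mul_div_cancel_of_imp']
  rintro hm
  obtain rfl : m = 0 := by exact_mod_cast hm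
  simp

lemma isDist_empDist (hm : 0 < m) (x : Fin m → X) : IsDist (empDist x) := by
  refine ⟨empDist_nonneg x, mul_left_cancel₀ (Nat.cast_ne_zero.mpr hm.ne' : (m : ℝ) ≠ 0) ?_⟩
  simpa using (sum_apply_eq_mul_sum_empDist x fun _ => 1).symm

lemma seqProb_eq_seqProb_mul_exp {P Q : X → ℝ} {x : Fin m → X} (hP : ∀ i, 0 < P (x i))
    (hQ : ∀ i, 0 < Q (x i)) :
    seqProb P x =
      seqProb Q x * Real.exp (-(m * ∑ a, empDist x a * Real.log (Q a / P a))) := by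
  unfold seqProb
  rw [← sum_apply_eq_mul_sum_empDist x fun a => Real.log (Q a / P a), ← Finset.sum_neg_distrib,
    Real.exp_sum, ← Finset.prod_mul_distrib]
  refine Finset.prod_congr rfl fun i _ => ?_
  rw [Real.exp_neg, Real.exp_log (div_pos (hQ i) (hP i)), inv_div, mul_div_cancel₀ _ (hQ i).ne']

lemma seqProb_eq_seqProb_empDist_mul_exp {P : X → ℝ} {x : Fin m → X} (hP : ∀ i, 0 < P (x i)) :
    seqProb P x = seqProb (empDist x) x * Real.exp (-(m * klDivR (empDist x) P)) :=
  seqProb_eq_seqProb_mul_exp hP (empDist_apply_pos x)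

open Classical in
lemma card_image_empDist_le (m : ℕ) :
    (Finset.univ.image (empDist : (Fin m → X) → X → ℝ)).card ≤ (m + 1) ^ Fintype.card X := by
  have hsub : Finset.univ.image (empDist : (Fin m → X) → X → ℝ) ⊆
      Finset.univ.image fun (k : X → Fin (m + 1)) a => (k a : ℝ) / m := by
    refine Finset.image_subset_iff.mpr fun x _ => Finset.mem_image.mpr
      ⟨fun a => ⟨(Finset.univ.filter fun i => x i = a).card, Nat.lt_succ_of_le ?_⟩,
        Finset.mem_univ _, rfl⟩
    exact (Finset.card_le_univ _).trans_eq (Fintype.card_fin m)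
  calc _ ≤ _ := Finset.card_le_card hsub
    _ ≤ Fintype.card (X → Fin (m + 1)) := Finset.card_image_le
    _ = (m + 1) ^ Fintype.card X := by rw [Fintype.card_fun, Fintype.card_fin]

open Classical in
lemma sum_seqProb_empDist_le (hm : 0 < m) :
    ∑ x : Fin m → X, seqProb (empDist x) x ≤ ((m : ℝ) + 1) ^ Fintype.card X := by
  have hclass : ∀ Q ∈ Finset.univ.image (empDist : (Fin m → X) → X → ℝ),
      ∑ x : Fin m → X with empDist x = Q, seqProb (empDist x) x ≤ 1 := by
    intro Q hQ
    obtain ⟨x₀, -, rfl⟩ := Finset.mem_image.mp hQ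
    have hdist := isDist_empDist hm x₀
    calc ∑ x with empDist x = empDist x₀, seqProb (empDist x) x
        = ∑ x with empDist x = empDist x₀, seqProb (empDist x₀) x :=
          Finset.sum_congr rfl fun x hx => by rw [(Finset.mem_filter.mp hx).2]
      _ ≤ ∑ x, seqProb (empDist x₀) x :=
          Finset.sum_le_univ_sum_of_nonneg (seqProb_nonneg hdist.1)
      _ = 1 := sum_seqProb hdist m
  calc ∑ x : Fin m → X, seqProb (empDist x) x
      = ∑ Q ∈ Finset.univ.image empDist, ∑ x with empDist x = Q, seqProb (empDist x) x :=
        (Finset.sum_fiberwise_of_maps_to (fun x _ => Finset.mem_image_of_mem _ (Finset.mem_univ x))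
          _).symm
    _ ≤ (Finset.univ.image (empDist : (Fin m → X) → X → ℝ)).card • 1 :=
        Finset.sum_le_card_nsmul _ _ _ hclass
    _ ≤ ((m : ℝ) + 1) ^ Fintype.card X := by
        rw [nsmul_eq_mul, mul_one]
        exact_mod_cast card_image_empDist_le m

end Types

section TwoSample

variable {N n : ℕ}

/-- The probability of the event `A` about a pair of independent samples, the first i.i.d. from `P`
and the second i.i.d. from `Q`. -/
noncomputable def pairProb (P Q : X → ℝ) (A : Finset ((Fin N → X) × (Fin n → X))) : ℝ :=
  ∑ z ∈ A, seqProb P z.1 * seqProb Q z.2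

omit [Fintype X] [DecidableEq X] in
lemma pairProb_mono {P Q : X → ℝ} (hP : ∀ x, 0 ≤ P x) (hQ : ∀ x, 0 ≤ Q x)
    {A B : Finset ((Fin N → X) × (Fin n → X))} (h : A ⊆ B) : pairProb P Q A ≤ pairProb P Q B :=
  Finset.sum_le_sum_of_subset_of_nonneg h fun z _ _ =>
    mul_nonneg (seqProb_nonneg hP z.1) (seqProb_nonneg hQ z.2)

omit [DecidableEq X] in
lemma pairProb_univ {P Q : X → ℝ} (hP : IsDist P) (hQ : IsDist Q) :
    pairProb P Q (Finset.univ : Finset ((Fin N → X) × (Fin n → X))) = 1 := by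
  rw [pairProb, Fintype.sum_prod_type, ← Finset.sum_mul_sum, sum_seqProb hP, sum_seqProb hQ,
    one_mul]

lemma pairProb_add_pairProb_compl {P Q : X → ℝ} (hP : IsDist P) (hQ : IsDist Q)
    (A : Finset ((Fin N → X) × (Fin n → X))) : pairProb P Q A + pairProb P Q Aᶜ = 1 := by
  rw [← pairProb_univ hP hQ]
  exact Finset.sum_add_sum_compl A _

lemma sum_sum_sum_ite_mem_eq_pairProb {M : ℕ} {P P' Q : X → ℝ} (hP' : IsDist P')
    (A : Finset ((Fin N → X) × (Fin n → X))) :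
    ∑ x : Fin N → X, ∑ x' : Fin M → X, ∑ y : Fin n → X,
      (if (x, y) ∈ A then seqProb P x * seqProb P' x' * seqProb Q y else 0) = pairProb P Q A := by
  rw [pairProb, ← Finset.sum_ite_mem_eq A, Fintype.sum_prod_type]
  refine Finset.sum_congr rfl fun x _ => ?_
  rw [Finset.sum_comm]
  refine Finset.sum_congr rfl fun y _ => ?_
  split_ifs
  · rw [← Finset.sum_mul, ← Finset.mul_sum, sum_seqProb hP', mul_one]
  · exact Finset.sum_const_zero

lemma pairProb_le_of_le_klDivR (hN : 0 < N) (hn : 0 < n) {P Q : X → ℝ} (hP : ∀ x, 0 ≤ P x)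
    (hQ : ∀ x, 0 ≤ Q x) {A : Finset ((Fin N → X) × (Fin n → X))} {E : ℝ}
    (hA : ∀ z ∈ A, (∀ i, 0 < P (z.1 i)) → (∀ i, 0 < Q (z.2 i)) →
      E ≤ N * klDivR (empDist z.1) P + n * klDivR (empDist z.2) Q) :
    pairProb P Q A ≤
      ((N : ℝ) + 1) ^ Fintype.card X * ((n : ℝ) + 1) ^ Fintype.card X * Real.exp (-E) := by
  have hnonneg : ∀ z : (Fin N → X) × (Fin n → X),
      0 ≤ seqProb (empDist z.1) z.1 * seqProb (empDist z.2) z.2 * Real.exp (-E) := fun z =>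
    mul_nonneg (mul_nonneg (seqProb_nonneg (empDist_nonneg _) _)
      (seqProb_nonneg (empDist_nonneg _) _)) (Real.exp_pos _).le
  have hterm : ∀ z ∈ A, seqProb P z.1 * seqProb Q z.2 ≤
      seqProb (empDist z.1) z.1 * seqProb (empDist z.2) z.2 * Real.exp (-E) := by
    intro z hz
    by_cases hzero : seqProb P z.1 = 0 ∨ seqProb Q z.2 = 0
    · rw [mul_eq_zero.mpr hzero]
      exact hnonneg z
    simp only [seqProb, Finset.prod_eq_zero_iff, Finset.mem_univ, true_and, not_or,
      not_exists] at hzero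
    have hPz : ∀ i, 0 < P (z.1 i) := fun i => (hP _).lt_of_ne' (hzero.1 i)
    have hQz : ∀ i, 0 < Q (z.2 i) := fun i => (hQ _).lt_of_ne' (hzero.2 i)
    rw [seqProb_eq_seqProb_empDist_mul_exp hPz, seqProb_eq_seqProb_empDist_mul_exp hQz,
      mul_mul_mul_comm, ← Real.exp_add, ← neg_add]
    have := seqProb_nonneg (empDist_nonneg z.1) z.1
    have := seqProb_nonneg (empDist_nonneg z.2) z.2
    have := hA z hz hPz hQz
    gcongr
  calc pairProb P Q A
      ≤ ∑ z ∈ A, seqProb (empDist z.1) z.1 * seqProb (empDist z.2) z.2 * Real.exp (-E) :=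
        Finset.sum_le_sum hterm
    _ ≤ ∑ z : (Fin N → X) × (Fin n → X),
          seqProb (empDist z.1) z.1 * seqProb (empDist z.2) z.2 * Real.exp (-E) :=
        Finset.sum_le_univ_sum_of_nonneg hnonneg
    _ = (∑ x : Fin N → X, seqProb (empDist x) x) * (∑ y : Fin n → X, seqProb (empDist y) y) *
          Real.exp (-E) := by
        rw [← Finset.sum_mul, Fintype.sum_prod_type, Finset.sum_mul_sum]
    _ ≤ _ := by
        gcongr
        · exact Finset.sum_nonneg fun y _ => seqProb_nonneg (empDist_nonneg y) y
        · exact sum_seqProb_empDist_le hN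
        · exact sum_seqProb_empDist_le hn

end TwoSample

section GutmanTest

variable {α : ℝ} {n : ℕ}

lemma trainLen_pos (hα : 0 < α) (hn : 0 < n) : 0 < trainLen α n :=
  Nat.ceil_pos.mpr (by positivity)

lemma le_trainLen (α : ℝ) (n : ℕ) : α * n ≤ trainLen α n := Nat.le_ceil _

lemma trainLen_le (hα : 0 < α) (n : ℕ) : (trainLen α n : ℝ) ≤ α * n + 1 :=
  (Nat.ceil_lt_add_one (by positivity)).le

open Classical in
/-- The pairs of first training sequence and test sequence for which Gutman's test with threshold
`lam` declares `H₁`; the second training sequence does not enter the decision. -/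
noncomputable def gutmanAccept (α lam : ℝ) (n : ℕ) :
    Finset ((Fin (trainLen α n) → X) × (Fin n → X)) :=
  Finset.univ.filter fun z => GJS (empDist z.1) (empDist z.2) α ≤ lam

lemma mem_gutmanAccept {lam : ℝ} {z : (Fin (trainLen α n) → X) × (Fin n → X)} :
    z ∈ gutmanAccept α lam n ↔ GJS (empDist z.1) (empDist z.2) α ≤ lam := by
  simp [gutmanAccept]

lemma gutmanAccept_subset {lam lam' : ℝ} (h : lam ≤ lam') :
    (gutmanAccept α lam n : Finset ((Fin (trainLen α n) → X) × (Fin n → X))) ⊆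
      gutmanAccept α lam' n := fun _ hz =>
  mem_gutmanAccept.mpr ((mem_gutmanAccept.mp hz).trans h)

lemma beta1_gutman (lam : ℝ) {Q1 Q2 : X → ℝ} (h2 : IsDist Q2) :
    beta1 (gutman α lam n) Q1 Q2 = pairProb Q1 Q1 (gutmanAccept α lam n)ᶜ := by
  classical
  rw [beta1, ← sum_sum_sum_ite_mem_eq_pairProb (M := trainLen α n) h2]
  simp [gutman, mem_gutmanAccept]

lemma beta2_gutman (lam : ℝ) {P1 P2 : X → ℝ} (h2 : IsDist P2) :
    beta2 (gutman α lam n) P1 P2 = pairProb P1 P2 (gutmanAccept α lam n) := by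
  classical
  rw [beta2, ← sum_sum_sum_ite_mem_eq_pairProb (M := trainLen α n) h2]
  simp [gutman, mem_gutmanAccept]

lemma beta1_gutman_le (hα : 0 < α) (hn : 0 < n) (η : ℝ) {Q1 Q2 : X → ℝ} (h1 : IsDist Q1)
    (h2 : IsDist Q2) :
    beta1 (gutman α η n) Q1 Q2 ≤ ((trainLen α n : ℝ) + 1) ^ Fintype.card X *
      ((n : ℝ) + 1) ^ Fintype.card X * Real.exp (-(n * η)) := by
  have hN := trainLen_pos hα hn
  rw [beta1_gutman η h2]
  refine pairProb_le_of_le_klDivR hN hn h1.1 h1.1 fun z hz hx hy => ?_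
  have hreject : η < GJS (empDist z.1) (empDist z.2) α := by
    simpa [mem_gutmanAccept] using hz
  have hac : ∀ {m : ℕ} {x : Fin m → X}, (∀ i, 0 < Q1 (x i)) → ∀ a, Q1 a = 0 → empDist x a = 0 :=
    fun hx a ha => empDist_eq_zero fun i hi => (hx i).ne' (hi ▸ ha)
  have hdist := isDist_empDist hN z.1
  have hGJS := GJS_le_mul_klDivR_add_klDivR hdist (isDist_empDist hn z.2) h1 hα (hac hx) (hac hy)
  have hkl := klDivR_nonneg hdist h1 (hac hx)
  calc n * η ≤ n * (α * klDivR (empDist z.1) Q1 + klDivR (empDist z.2) Q1) := by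
        gcongr
        exact hreject.le.trans hGJS
    _ = α * n * klDivR (empDist z.1) Q1 + n * klDivR (empDist z.2) Q1 := by ring
    _ ≤ _ := by
        gcongr
        exact le_trainLen α n

lemma tendsto_trainLen_pow_mul_exp_neg (hα : 0 < α) (k : ℕ) {η : ℝ} (hη : 0 < η) :
    Tendsto (fun n : ℕ => ((trainLen α n : ℝ) + 1) ^ k * ((n : ℝ) + 1) ^ k * Real.exp (-(n * η)))
      atTop (𝓝 0) := by
  have hdecay : Tendsto (fun n : ℕ => ((n + 1 : ℕ) : ℝ) ^ (2 * k) * Real.exp (-η) ^ (n + 1))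
      atTop (𝓝 0) := by
    refine (tendsto_pow_const_mul_const_pow_of_abs_lt_one (2 * k) ?_).comp (tendsto_add_atTop_nat 1)
    rwa [Real.abs_exp, Real.exp_lt_one_iff, neg_lt_zero]
  have hbound := hdecay.const_mul ((α + 2) ^ k * Real.exp η)
  rw [mul_zero] at hbound
  refine squeeze_zero (fun n => by positivity) (fun n => ?_) hbound
  calc ((trainLen α n : ℝ) + 1) ^ k * ((n : ℝ) + 1) ^ k * Real.exp (-(n * η))
      ≤ ((α + 2) * ((n : ℝ) + 1)) ^ k * ((n : ℝ) + 1) ^ k * Real.exp (-(n * η)) := by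
        gcongr
        nlinarith [trainLen_le hα n, Nat.cast_nonneg (α := ℝ) n]
    _ = (α + 2) ^ k * Real.exp η * (((n + 1 : ℕ) : ℝ) ^ (2 * k) * Real.exp (-η) ^ (n + 1)) := by
        have hexp : Real.exp (-(n * η)) = Real.exp η * Real.exp (-η) ^ (n + 1) := by
          rw [← Real.exp_nat_mul, ← Real.exp_add]
          congr 1
          push_cast
          ring
        rw [hexp, mul_pow, Nat.cast_add_one]
        ring

/-- Whatever the two distributions are, the type-I error probability of `φ` is at most `ε`. -/
def HasUniversalLevel (φ : BTest X α n) (ε : ℝ) : Prop :=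
  ∀ Q1 Q2 : X → ℝ, IsDist Q1 → IsDist Q2 → beta1 φ Q1 Q2 ≤ ε

lemma eventually_hasUniversalLevel_gutman (hα : 0 < α) {η ε : ℝ} (hη : 0 < η) (hε : 0 < ε) :
    ∀ᶠ n : ℕ in atTop, HasUniversalLevel (X := X) (gutman α η n) ε := by
  filter_upwards [(tendsto_trainLen_pow_mul_exp_neg hα (Fintype.card X) hη).eventually_le_const hε,
    eventually_gt_atTop 0] with n hsmall hn Q1 Q2 h1 h2
  exact (beta1_gutman_le hα hn η h1 h2).trans hsmall

end GutmanTest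

section Tilting

variable {α : ℝ} {P1 P2 : X → ℝ}

section

variable [Nonempty X]

omit [DecidableEq X]

lemma sum_rpow_mul_rpow_pos (α : ℝ) (hs1 : FullSupport P1) (hs2 : FullSupport P2) :
    0 < ∑ a, P1 a ^ (α / (1 + α)) * P2 a ^ (1 / (1 + α)) :=
  Finset.sum_pos (fun a _ => mul_pos (Real.rpow_pos_of_pos (hs1 a) _)
    (Real.rpow_pos_of_pos (hs2 a) _)) Finset.univ_nonempty

lemma fullSupport_tilt (α : ℝ) (hs1 : FullSupport P1) (hs2 : FullSupport P2) :
    FullSupport (tilt α P1 P2) := fun x =>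
  div_pos (mul_pos (Real.rpow_pos_of_pos (hs1 x) _) (Real.rpow_pos_of_pos (hs2 x) _))
    (sum_rpow_mul_rpow_pos α hs1 hs2)

lemma isDist_tilt (α : ℝ) (hs1 : FullSupport P1) (hs2 : FullSupport P2) :
    IsDist (tilt α P1 P2) := by
  refine ⟨fun x => (fullSupport_tilt α hs1 hs2 x).le, ?_⟩
  unfold tilt
  rw [← Finset.sum_div, div_self (sum_rpow_mul_rpow_pos α hs1 hs2).ne']

end

omit [DecidableEq X] in
lemma renyi_eq_neg_mul_log_sum (hα : 0 < α) (P1 P2 : X → ℝ) :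
    renyi (α / (1 + α)) P1 P2 =
      -(1 + α) * Real.log (∑ a, P1 a ^ (α / (1 + α)) * P2 a ^ (1 / (1 + α))) := by
  have hcompl : 1 - α / (1 + α) = 1 / (1 + α) := by
    field_simp
    ring
  have hcoeff : 1 / (α / (1 + α) - 1) = -(1 + α) := by
    rw [← neg_sub, hcompl, one_div_neg_eq_neg_one_div, one_div_one_div]
  rw [renyi, hcompl, hcoeff]

omit [DecidableEq X] in
lemma mul_log_tilt_div_add_log_tilt_div [Nonempty X] (hα : 0 < α) (hs1 : FullSupport P1)
    (hs2 : FullSupport P2) (x : X) :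
    α * Real.log (tilt α P1 P2 x / P1 x) + Real.log (tilt α P1 P2 x / P2 x) =
      renyi (α / (1 + α)) P1 P2 := by
  have hr1 := Real.rpow_pos_of_pos (hs1 x) (α / (1 + α))
  have hr2 := Real.rpow_pos_of_pos (hs2 x) (1 / (1 + α))
  have hT := (fullSupport_tilt α hs1 hs2 x).ne'
  rw [Real.log_div hT (hs1 x).ne', Real.log_div hT (hs2 x).ne', renyi_eq_neg_mul_log_sum hα, tilt,
    Real.log_div (mul_pos hr1 hr2).ne' (sum_rpow_mul_rpow_pos α hs1 hs2).ne',
    Real.log_mul hr1.ne' hr2.ne', Real.log_rpow (hs1 x), Real.log_rpow (hs2 x)]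
  field_simp
  ring

omit [DecidableEq X] in
lemma mul_klDivR_tilt_add_klDivR_tilt [Nonempty X] (hα : 0 < α) (hs1 : FullSupport P1)
    (hs2 : FullSupport P2) :
    α * klDivR (tilt α P1 P2) P1 + klDivR (tilt α P1 P2) P2 = renyi (α / (1 + α)) P1 P2 := by
  simp only [klDivR, Finset.mul_sum, ← Finset.sum_add_distrib]
  calc _ = ∑ x, tilt α P1 P2 x * renyi (α / (1 + α)) P1 P2 := Finset.sum_congr rfl fun x _ => by
        rw [← mul_log_tilt_div_add_log_tilt_div hα hs1 hs2 x]
        ring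
    _ = _ := by rw [← Finset.sum_mul, (isDist_tilt α hs1 hs2).2, one_mul]

omit [DecidableEq X] in
lemma renyi_nonneg (hα : 0 < α) (h1 : IsDist P1) (h2 : IsDist P2) (hs1 : FullSupport P1)
    (hs2 : FullSupport P2) : 0 ≤ renyi (α / (1 + α)) P1 P2 := by
  have := h1.nonempty
  have hT := isDist_tilt α hs1 hs2
  have hkl1 := klDivR_nonneg hT h1 fun x hx => absurd hx (hs1 x).ne'
  have hkl2 := klDivR_nonneg hT h2 fun x hx => absurd hx (hs2 x).ne'
  rw [← mul_klDivR_tilt_add_klDivR_tilt hα hs1 hs2]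
  positivity

omit [DecidableEq X] in
lemma abs_cross_log_sub_renyi_le [Nonempty X] (hα : 0 < α) (hs1 : FullSupport P1)
    (hs2 : FullSupport P2) {Q1 Q2 : X → ℝ} (hQ2 : IsDist Q2) {c : ℝ}
    (hc : ∀ x, |Q1 x - Q2 x| ≤ c) :
    |α * ∑ x, Q1 x * Real.log (tilt α P1 P2 x / P1 x) +
        ∑ x, Q2 x * Real.log (tilt α P1 P2 x / P2 x) - renyi (α / (1 + α)) P1 P2| ≤
      α * (c * ∑ x, |Real.log (tilt α P1 P2 x / P1 x)|) := by
  have hR : renyi (α / (1 + α)) P1 P2 = ∑ x, Q2 x * renyi (α / (1 + α)) P1 P2 := by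
    rw [← Finset.sum_mul, hQ2.2, one_mul]
  have hdiff : α * ∑ x, Q1 x * Real.log (tilt α P1 P2 x / P1 x) +
        ∑ x, Q2 x * Real.log (tilt α P1 P2 x / P2 x) - renyi (α / (1 + α)) P1 P2 =
      α * ∑ x, (Q1 x - Q2 x) * Real.log (tilt α P1 P2 x / P1 x) := by
    rw [hR, Finset.mul_sum, Finset.mul_sum, ← Finset.sum_add_distrib, ← Finset.sum_sub_distrib]
    refine Finset.sum_congr rfl fun x _ => ?_
    rw [← mul_log_tilt_div_add_log_tilt_div hα hs1 hs2 x]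
    ring
  rw [hdiff, abs_mul, abs_of_pos hα, Finset.mul_sum]
  gcongr
  refine (Finset.abs_sum_le_sum_abs _ _).trans (Finset.sum_le_sum fun x _ => ?_)
  rw [abs_mul]
  gcongr
  exact hc x

/-- The log-likelihood ratio of the pair of samples `z` between the hypothesis that both are drawn
from `tilt α P1 P2` and the hypothesis that they are drawn from `P1` and `P2` respectively, written
in terms of the types of the samples. -/
noncomputable def tiltLLR {N n : ℕ} (α : ℝ) (P1 P2 : X → ℝ) (z : (Fin N → X) × (Fin n → X)) : ℝ :=
  N * ∑ a, empDist z.1 a * Real.log (tilt α P1 P2 a / P1 a) +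
    n * ∑ a, empDist z.2 a * Real.log (tilt α P1 P2 a / P2 a)

lemma seqProb_mul_seqProb_eq_mul_exp_neg_tiltLLR [Nonempty X] {N n : ℕ} (α : ℝ)
    (hs1 : FullSupport P1) (hs2 : FullSupport P2) (z : (Fin N → X) × (Fin n → X)) :
    seqProb P1 z.1 * seqProb P2 z.2 =
      seqProb (tilt α P1 P2) z.1 * seqProb (tilt α P1 P2) z.2 *
        Real.exp (-tiltLLR α P1 P2 z) := by
  have hT := fullSupport_tilt α hs1 hs2
  rw [seqProb_eq_seqProb_mul_exp (fun i => hs1 (z.1 i)) (fun i => hT (z.1 i)),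
    seqProb_eq_seqProb_mul_exp (fun i => hs2 (z.2 i)) (fun i => hT (z.2 i)),
    mul_mul_mul_comm, ← Real.exp_add, ← neg_add, tiltLLR]

lemma abs_tiltLLR_sub_le [Nonempty X] (hα : 0 < α) (hs1 : FullSupport P1)
    (hs2 : FullSupport P2) {n : ℕ} (hn : 0 < n) {z : (Fin (trainLen α n) → X) × (Fin n → X)}
    {c : ℝ} (hc : ∀ x, |empDist z.1 x - empDist z.2 x| ≤ c) :
    |tiltLLR α P1 P2 z - n * renyi (α / (1 + α)) P1 P2| ≤
      (α * c * n + 1) * ∑ x, |Real.log (tilt α P1 P2 x / P1 x)| := by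
  have hQ1 := isDist_empDist (trainLen_pos hα hn) z.1
  have hcross := abs_cross_log_sub_renyi_le hα hs1 hs2 (isDist_empDist hn z.2) hc
  set S1 := ∑ x, empDist z.1 x * Real.log (tilt α P1 P2 x / P1 x) with hS1
  set S2 := ∑ x, empDist z.2 x * Real.log (tilt α P1 P2 x / P2 x) with hS2
  set L := ∑ x, |Real.log (tilt α P1 P2 x / P1 x)|
  set R := renyi (α / (1 + α)) P1 P2
  have hS1_le : |S1| ≤ L := (Finset.abs_sum_le_sum_abs _ _).trans <| Finset.sum_le_sum fun x _ => by
    rw [abs_mul, abs_of_nonneg (hQ1.1 x)]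
    exact mul_le_of_le_one_left (abs_nonneg _) (hQ1.le_one x)
  have hround : |(trainLen α n : ℝ) - α * n| ≤ 1 :=
    abs_le.mpr ⟨by linarith [le_trainLen α n], by linarith [trainLen_le hα n]⟩
  calc |tiltLLR α P1 P2 z - n * R|
      = |n * (α * S1 + S2 - R) + (trainLen α n - α * n) * S1| := by
        rw [tiltLLR, ← hS1, ← hS2]
        ring_nf
    _ ≤ |n * (α * S1 + S2 - R)| + |(trainLen α n - α * n) * S1| := abs_add_le _ _
    _ ≤ n * (α * (c * L)) + 1 * L := by
        rw [abs_mul, abs_mul, Nat.abs_cast]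
        gcongr
    _ = (α * c * n + 1) * L := by ring

lemma exists_eventually_abs_tiltLLR_sub_le [Nonempty X] (hα : 0 < α) (hs1 : FullSupport P1)
    (hs2 : FullSupport P2) {δ : ℝ} (hδ : 0 < δ) :
    ∃ η : ℝ, 0 < η ∧ ∀ᶠ n : ℕ in atTop, ∀ z ∈ gutmanAccept α η n,
      |tiltLLR α P1 P2 z - n * renyi (α / (1 + α)) P1 P2| ≤ n * δ := by
  set L := ∑ x, |Real.log (tilt α P1 P2 x / P1 x)|
  have : 0 ≤ L := Finset.sum_nonneg fun _ _ => abs_nonneg _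
  obtain ⟨η, hη, hclose⟩ := exists_abs_sub_le_of_GJS_le (X := X) hα
    (c := δ / (2 * (α * L + 1))) (by positivity)
  refine ⟨η, hη, ?_⟩
  filter_upwards [eventually_gt_atTop 0, eventually_ge_atTop ⌈2 * L / δ⌉₊] with n hn hlarge z hz
  have hLn : L ≤ n * δ / 2 := by
    have := Nat.ceil_le.mp hlarge
    rw [div_le_iff₀ hδ] at this
    linarith
  have hcL : δ / (2 * (α * L + 1)) * (α * L) ≤ δ / 2 := by
    rw [div_mul_eq_mul_div, div_le_div_iff₀ (by positivity) two_pos]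
    nlinarith
  calc _ ≤ (α * (δ / (2 * (α * L + 1))) * n + 1) * L :=
        abs_tiltLLR_sub_le hα hs1 hs2 hn <| hclose _ _ (isDist_empDist (trainLen_pos hα hn) _)
          (isDist_empDist hn _) (mem_gutmanAccept.mp hz)
    _ = δ / (2 * (α * L + 1)) * (α * L) * n + L := by ring
    _ ≤ δ / 2 * n + n * δ / 2 := by gcongr
    _ = n * δ := by ring

lemma pairProb_le_of_le_tiltLLR [Nonempty X] (hs1 : FullSupport P1) (hs2 : FullSupport P2)
    {N n : ℕ} {A : Finset ((Fin N → X) × (Fin n → X))} {E : ℝ}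
    (hA : ∀ z ∈ A, E ≤ tiltLLR α P1 P2 z) : pairProb P1 P2 A ≤ Real.exp (-E) := by
  have hT := isDist_tilt α hs1 hs2
  calc pairProb P1 P2 A ≤ pairProb (tilt α P1 P2) (tilt α P1 P2) A * Real.exp (-E) := by
        rw [pairProb, pairProb, Finset.sum_mul]
        refine Finset.sum_le_sum fun z hz => ?_
        rw [seqProb_mul_seqProb_eq_mul_exp_neg_tiltLLR α hs1 hs2]
        have := seqProb_nonneg hT.1 z.1
        have := seqProb_nonneg hT.1 z.2
        have := hA z hz
        gcongr
    _ ≤ Real.exp (-E) := mul_le_of_le_one_left (Real.exp_pos _).le <|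
        (pairProb_mono hT.1 hT.1 (Finset.subset_univ A)).trans_eq (pairProb_univ hT hT)

lemma mul_exp_neg_le_pairProb_of_tiltLLR_le [Nonempty X] (hs1 : FullSupport P1)
    (hs2 : FullSupport P2) {N n : ℕ} {A : Finset ((Fin N → X) × (Fin n → X))} {E : ℝ}
    (hA : ∀ z ∈ A, tiltLLR α P1 P2 z ≤ E) :
    pairProb (tilt α P1 P2) (tilt α P1 P2) A * Real.exp (-E) ≤ pairProb P1 P2 A := by
  have hT := isDist_tilt α hs1 hs2
  rw [pairProb, pairProb, Finset.sum_mul]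
  refine Finset.sum_le_sum fun z hz => ?_
  rw [seqProb_mul_seqProb_eq_mul_exp_neg_tiltLLR α hs1 hs2]
  have := seqProb_nonneg hT.1 z.1
  have := seqProb_nonneg hT.1 z.2
  have := hA z hz
  gcongr

end Tilting

section DualExponent

variable {α ε : ℝ} {P1 P2 : X → ℝ}

/-- The type-II exponents at `(P1, P2)` and sample size `n` of Gutman's tests with universal
type-I level `ε`; their supremum is `tauStarGut α n ε P1 P2`. -/
def achievableExponents (α : ℝ) (n : ℕ) (ε : ℝ) (P1 P2 : X → ℝ) : Set ℝ :=
  {τ | 0 ≤ τ ∧ ∃ lam : ℝ, 0 ≤ lam ∧ HasUniversalLevel (gutman (X := X) α lam n) ε ∧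
    beta2 (gutman α lam n) P1 P2 ≤ Real.exp (-((n : ℝ) * τ))}

lemma eventually_renyi_sub_mem_achievableExponents (hα : 0 < α) (hε : 0 < ε) (h2 : IsDist P2)
    (hs1 : FullSupport P1) (hs2 : FullSupport P2) {δ : ℝ} (hδ : 0 < δ)
    (hδR : δ ≤ renyi (α / (1 + α)) P1 P2) :
    ∀ᶠ n : ℕ in atTop, renyi (α / (1 + α)) P1 P2 - δ ∈ achievableExponents α n ε P1 P2 := by
  have := h2.nonempty
  obtain ⟨η, hη, hllr⟩ := exists_eventually_abs_tiltLLR_sub_le hα hs1 hs2 hδ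
  filter_upwards [hllr, eventually_hasUniversalLevel_gutman (X := X) hα hη hε] with n hllr hlevel
  refine ⟨sub_nonneg.mpr hδR, η, hη.le, hlevel, ?_⟩
  rw [beta2_gutman η h2]
  refine pairProb_le_of_le_tiltLLR (α := α) hs1 hs2 fun z hz => ?_
  linarith [(abs_le.mp (hllr z hz)).1]

/-- Lowering the threshold only decreases the type-II error, so the threshold may be assumed small
enough for the log-likelihood ratio to concentrate on the whole acceptance region. -/
lemma eventually_mul_exp_neg_le_beta2_gutman (hα : 0 < α) (hε : 0 < ε) (h2 : IsDist P2)
    (hs1 : FullSupport P1) (hs2 : FullSupport P2) {δ : ℝ} (hδ : 0 < δ) :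
    ∀ᶠ n : ℕ in atTop, ∀ lam : ℝ, HasUniversalLevel (X := X) (gutman α lam n) ε →
      (1 - ε) * Real.exp (-(n * (renyi (α / (1 + α)) P1 P2 + δ))) ≤
        beta2 (gutman α lam n) P1 P2 := by
  have := h2.nonempty
  obtain ⟨η, hη, hllr⟩ := exists_eventually_abs_tiltLLR_sub_le hα hs1 hs2 hδ
  filter_upwards [hllr, eventually_hasUniversalLevel_gutman (X := X) hα hη hε]
    with n hllr hη_level lam hlam
  have hT := isDist_tilt α hs1 hs2
  have hlevel : HasUniversalLevel (X := X) (gutman α (min lam η) n) ε := by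
    rcases min_choice lam η with h | h <;> rwa [h]
  have haccept : 1 - ε ≤
      pairProb (tilt α P1 P2) (tilt α P1 P2) (gutmanAccept α (min lam η) n) := by
    have := hlevel _ _ hT hT
    rw [beta1_gutman _ hT] at this
    linarith [pairProb_add_pairProb_compl hT hT (gutmanAccept α (min lam η) n)]
  calc (1 - ε) * Real.exp (-(n * (renyi (α / (1 + α)) P1 P2 + δ)))
      ≤ pairProb (tilt α P1 P2) (tilt α P1 P2) (gutmanAccept α (min lam η) n) *
          Real.exp (-(n * (renyi (α / (1 + α)) P1 P2 + δ))) := by gcongr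
    _ ≤ pairProb P1 P2 (gutmanAccept α (min lam η) n) :=
        mul_exp_neg_le_pairProb_of_tiltLLR_le hs1 hs2 fun z hz => by
          have := hllr z (gutmanAccept_subset (min_le_right lam η) hz)
          linarith [(abs_le.mp this).2]
    _ ≤ pairProb P1 P2 (gutmanAccept α lam n) :=
        pairProb_mono (fun x => (hs1 x).le) h2.1 (gutmanAccept_subset (min_le_left lam η))
    _ = beta2 (gutman α lam n) P1 P2 := (beta2_gutman lam h2).symm

lemma eventually_renyi_add_mem_upperBounds (hα : 0 < α) (hε : ε ∈ Set.Ioo (0 : ℝ) 1)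
    (h2 : IsDist P2) (hs1 : FullSupport P1) (hs2 : FullSupport P2) {δ : ℝ} (hδ : 0 < δ) :
    ∀ᶠ n : ℕ in atTop,
      renyi (α / (1 + α)) P1 P2 + δ ∈ upperBounds (achievableExponents α n ε P1 P2) := by
  have hvanish : Tendsto (fun n : ℕ => Real.exp (-(n * (δ / 2)))) atTop (𝓝 0) :=
    Real.tendsto_exp_neg_atTop_nhds_zero.comp
      (tendsto_natCast_atTop_atTop.atTop_mul_const (half_pos hδ))
  filter_upwards [hvanish.eventually_lt_const (sub_pos.mpr hε.2),
    eventually_mul_exp_neg_le_beta2_gutman hα hε.1 h2 hs1 hs2 (half_pos hδ)]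
    with n hsmall hbeta2 τ hτ
  obtain ⟨-, lam, -, hlevel, hexp⟩ := hτ
  by_contra! hlt
  have hle := (hbeta2 lam hlevel).trans hexp
  have hsplit : Real.exp (-(n * τ)) ≤ Real.exp (-(n * (δ / 2))) *
      Real.exp (-(n * (renyi (α / (1 + α)) P1 P2 + δ / 2))) := by
    rw [← Real.exp_add]
    gcongr
    nlinarith [Nat.cast_nonneg (α := ℝ) n]
  exact (le_of_mul_le_mul_right (hle.trans hsplit) (Real.exp_pos _)).not_gt hsmall

end DualExponent

/-- Proposition 1 of the paper: Gutman's test in the dual setting: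
`τ*(n,α,ε|φ_n^Gut,P1,P2) → D_{α/(1+α)}(P1‖P2)` as `n → ∞`. -/
theorem tauStarGut_limit {X : Type*} [Fintype X] [DecidableEq X]
    (α ε : ℝ) (hα : 0 < α) (hε : ε ∈ Set.Ioo (0 : ℝ) 1)
    (P1 P2 : X → ℝ) (h1 : IsDist P1) (h2 : IsDist P2)
    (hs1 : FullSupport P1) (hs2 : FullSupport P2) :
    Filter.Tendsto (fun n : ℕ => tauStarGut α n ε P1 P2) Filter.atTop
      (nhds (renyi (α / (1 + α)) P1 P2)) := by
  have hR := renyi_nonneg hα h1 h2 hs1 hs2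
  rw [Metric.tendsto_nhds]
  intro δ hδ
  have hlower : ∀ᶠ n : ℕ in atTop, renyi (α / (1 + α)) P1 P2 < δ / 2 ∨
      renyi (α / (1 + α)) P1 P2 - δ / 2 ∈ achievableExponents α n ε P1 P2 := by
    rcases lt_or_ge (renyi (α / (1 + α)) P1 P2) (δ / 2) with hlt | hge
    · exact Eventually.of_forall fun _ => Or.inl hlt
    · exact (eventually_renyi_sub_mem_achievableExponents hα hε.1 h2 hs1 hs2 (half_pos hδ)
        hge).mono fun _ => Or.inr
  filter_upwards [hlower, eventually_renyi_add_mem_upperBounds hα hε h2 hs1 hs2 (half_pos hδ)]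
    with n hlower hupper
  change dist (sSup (achievableExponents α n ε P1 P2)) _ < δ
  have hle := Real.sSup_le hupper (add_nonneg hR (half_pos hδ).le)
  have hge : renyi (α / (1 + α)) P1 P2 - δ / 2 ≤ sSup (achievableExponents α n ε P1 P2) := by
    rcases hlower with hlt | hmem
    · exact (sub_neg.mpr hlt).le.trans (Real.sSup_nonneg fun τ hτ => hτ.1)
    · exact le_csSup ⟨_, hupper⟩ hmem
  rw [Real.dist_eq, abs_lt]
  constructor <;> linarith

end Classification
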